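/- arXiv:2106.06285 — 2 statements merged into one kernel-verified Lean document; each statement's English description precedes it below -/
import Mathlib

section
/- Let M be a polynomial of degree at most 2 whose cell averages satisfy (1/h)∫_{I₋₁} M = a, (1/h)∫_{I₀} M = b and (1/h)∫_{I₁} M = c. Then M(−h/(2√3)) = (√3/12)·a + b − (√3/12)·c and M(h/(2√3)) = −(√3/12)·a + b + (√3/12)·c. -/
open Polynomial

/-- On uniform cells `I₋₁ = [−3h/2, −h/2]`, `I₀ = [−h/2, h/2]`, `I₁ = [h/2, 3h/2]` of
width `h > 0`, a polynomial `M` of degree at most 2 with cell averages `a`, `b`, `c` on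
`I₋₁`, `I₀`, `I₁` takes the values `(√3/12)a + b − (√3/12)c` and `−(√3/12)a + b + (√3/12)c`
at the two Gauss–Legendre quadrature points `∓h/(2√3)` of `I₀`. -/
theorem weno_M_gauss_values (h : ℝ) (hh : 0 < h) (M : Polynomial ℝ)
    (hdeg : M.degree ≤ 2) (a b c : ℝ)
    (ha : (1 / h) * ∫ x in (-(3 * h / 2))..(-(h / 2)), M.eval x = a)
    (hb : (1 / h) * ∫ x in (-(h / 2))..(h / 2), M.eval x = b)
    (hc : (1 / h) * ∫ x in (h / 2)..(3 * h / 2), M.eval x = c) :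
    M.eval (-(h / (2 * Real.sqrt 3))) =
        (Real.sqrt 3 / 12) * a + b - (Real.sqrt 3 / 12) * c ∧
    M.eval (h / (2 * Real.sqrt 3)) =
        -(Real.sqrt 3 / 12) * a + b + (Real.sqrt 3 / 12) * c := by
  have hev : ∀ x : ℝ, M.eval x = M.coeff 0 + M.coeff 1 * x + M.coeff 2 * x ^ 2 := by
    intro x
    have hn : M.natDegree < 3 :=
      Nat.lt_succ_of_le (Polynomial.natDegree_le_of_degree_le hdeg)
    rw [Polynomial.eval_eq_sum_range' hn]
    simp [Finset.sum_range_succ]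
  generalize M.coeff 0 = p at hev
  generalize M.coeff 1 = q at hev
  generalize M.coeff 2 = r at hev
  have hint : ∀ u v : ℝ, ∫ x in u..v, M.eval x =
      (p * v + q * v ^ 2 / 2 + r * v ^ 3 / 3) - (p * u + q * u ^ 2 / 2 + r * u ^ 3 / 3) := by
    intro u v
    refine intervalIntegral.integral_eq_sub_of_hasDerivAt
      (f := fun x => p * x + q * x ^ 2 / 2 + r * x ^ 3 / 3) ?_
      (M.continuous.intervalIntegrable _ _)
    intro x _
    have h1 := (((hasDerivAt_id x).const_mul p).add
      ((((hasDerivAt_id x).pow 2).const_mul q).div_const 2)).add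
      ((((hasDerivAt_id x).pow 3).const_mul r).div_const 3)
    convert h1 using 1
    · rfl
    · rw [hev]
      simp
      ring
  rw [hint] at ha hb hc
  have h0 : h ≠ 0 := hh.ne'
  have ha' : a = p - q * h + r * (13 / 12) * h ^ 2 := by
    rw [← ha]; field_simp; ring
  have hb' : b = p + r * h ^ 2 / 12 := by
    rw [← hb]; field_simp; ring
  have hc' : c = p + q * h + r * (13 / 12) * h ^ 2 := by
    rw [← hc]; field_simp; ring
  have hs : Real.sqrt 3 ^ 2 = 3 := Real.sq_sqrt (by norm_num)
  have hs0 : Real.sqrt 3 ≠ 0 := by positivity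
  have hx : h / (2 * Real.sqrt 3) = h * Real.sqrt 3 / 6 := by
    field_simp
    rw [hs]; norm_num
  rw [hx, hev, hev, ha', hb', hc']
  constructor
  · linear_combination (r * h ^ 2 / 36) * hs
  · linear_combination (r * h ^ 2 / 36) * hs
end

section
/- Let p₀ be a polynomial of degree at most 1 with cell averages a on I₋₁ and b on I₀, let p₁ be a polynomial of degree at most 1 with cell averages b on I₀ and c on I₁, and let M be a polynomial of degree at most 2 with cell averages a on I₋₁, b on I₀ and c on I₁. Then at both Gauss quadrature points x_G = ±h/(2√3) one has M(x_G) = (1/2)·p₀(x_G) + (1/2)·p₁(x_G); i.e., the linear weights of the third-order WENO reconstruction at the two Gauss points of I₀ are γ₀ = γ₁ = 1/2. -/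
open Polynomial

/-- Evaluation of a polynomial of degree at most two. -/
lemma weno_eval_quad (p : Polynomial ℝ) (hp : p.degree ≤ 2) (x : ℝ) :
    p.eval x = p.coeff 0 + p.coeff 1 * x + p.coeff 2 * x ^ 2 := by
  have hn : p.natDegree < 3 := by
    have := Polynomial.natDegree_le_of_degree_le (n := 2) hp
    omega
  rw [Polynomial.eval_eq_sum_range' hn]
  simp [Finset.sum_range_succ]

/-- Integral of a polynomial of degree at most two. -/
lemma weno_integral_quad (p : Polynomial ℝ) (hp : p.degree ≤ 2) (u v : ℝ) :
    ∫ x in u..v, p.eval x = p.coeff 0 * (v - u) + p.coeff 1 * ((v ^ 2 - u ^ 2) / 2)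
      + p.coeff 2 * ((v ^ 3 - u ^ 3) / 3) := by
  have hd : ∀ x ∈ Set.uIcc u v, HasDerivAt
      (fun x : ℝ => p.coeff 0 * x + p.coeff 1 * (x ^ 2 / 2) + p.coeff 2 * (x ^ 3 / 3))
      (p.eval x) x := by
    intro x _
    rw [weno_eval_quad p hp x]
    have h1 := (hasDerivAt_id' x).const_mul (p.coeff 0)
    have h2 := ((hasDerivAt_pow 2 x).div_const 2).const_mul (p.coeff 1)
    have h3 := ((hasDerivAt_pow 3 x).div_const 3).const_mul (p.coeff 2)
    refine ((h1.add h2).add h3).congr_deriv ?_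
    norm_num
  rw [intervalIntegral.integral_eq_sub_of_hasDerivAt hd
    (p.continuous.intervalIntegrable u v)]
  ring

/-- On uniform cells `I₋₁ = [−3h/2, −h/2]`, `I₀ = [−h/2, h/2]`, `I₁ = [h/2, 3h/2]` of
width `h > 0`: if `p₀` (degree ≤ 1) has cell averages `a` on `I₋₁` and `b` on `I₀`,
`p₁` (degree ≤ 1) has cell averages `b` on `I₀` and `c` on `I₁`, and `M` (degree ≤ 2) has
cell averages `a`, `b`, `c` on `I₋₁`, `I₀`, `I₁`, then at both Gauss quadrature points
`x_G = ±h/(2√3)` of `I₀` one has `M(x_G) = (1/2)p₀(x_G) + (1/2)p₁(x_G)`; i.e. the linear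
weights of the third-order WENO reconstruction at the two Gauss points are
`γ₀ = γ₁ = 1/2`. -/
theorem weno_linear_weights_half (h : ℝ) (hh : 0 < h)
    (p₀ p₁ M : Polynomial ℝ)
    (hp₀deg : p₀.degree ≤ 1) (hp₁deg : p₁.degree ≤ 1) (hMdeg : M.degree ≤ 2)
    (a b c : ℝ)
    (hp₀a : (1 / h) * ∫ x in (-(3 * h / 2))..(-(h / 2)), p₀.eval x = a)
    (hp₀b : (1 / h) * ∫ x in (-(h / 2))..(h / 2), p₀.eval x = b)
    (hp₁b : (1 / h) * ∫ x in (-(h / 2))..(h / 2), p₁.eval x = b)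
    (hp₁c : (1 / h) * ∫ x in (h / 2)..(3 * h / 2), p₁.eval x = c)
    (hMa : (1 / h) * ∫ x in (-(3 * h / 2))..(-(h / 2)), M.eval x = a)
    (hMb : (1 / h) * ∫ x in (-(h / 2))..(h / 2), M.eval x = b)
    (hMc : (1 / h) * ∫ x in (h / 2)..(3 * h / 2), M.eval x = c) :
    ∀ xG : ℝ, (xG = -(h / (2 * Real.sqrt 3)) ∨ xG = h / (2 * Real.sqrt 3)) →
      M.eval xG = (1 / 2) * p₀.eval xG + (1 / 2) * p₁.eval xG := by
  have h12 : (1 : WithBot ℕ) ≤ 2 := by norm_num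
  have hz : ∀ p : Polynomial ℝ, p.degree ≤ 1 → p.coeff 2 = 0 := fun p hp =>
    Polynomial.coeff_eq_zero_of_degree_lt (lt_of_le_of_lt hp (by norm_num))
  have hne : h ≠ 0 := hh.ne'
  intro xG hx
  have hsq : xG ^ 2 = h ^ 2 / 12 := by
    have h3 : Real.sqrt 3 ^ 2 = 3 := Real.sq_sqrt (by norm_num)
    rcases hx with rfl | rfl
    · rw [neg_sq, div_pow, mul_pow, h3]; norm_num
    · rw [div_pow, mul_pow, h3]; norm_num
  rw [weno_integral_quad _ (hp₀deg.trans h12), hz _ hp₀deg] at hp₀a hp₀b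
  rw [weno_integral_quad _ (hp₁deg.trans h12), hz _ hp₁deg] at hp₁b hp₁c
  rw [weno_integral_quad _ hMdeg] at hMa hMb hMc
  rw [weno_eval_quad _ hMdeg, weno_eval_quad _ (hp₀deg.trans h12),
    weno_eval_quad _ (hp₁deg.trans h12), hz _ hp₀deg, hz _ hp₁deg, hsq]
  generalize p₀.coeff 0 = s0 at *
  generalize p₀.coeff 1 = s1 at *
  generalize p₁.coeff 0 = t0 at *
  generalize p₁.coeff 1 = t1 at *
  generalize M.coeff 0 = m0 at *
  generalize M.coeff 1 = m1 at *
  generalize M.coeff 2 = m2 at *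
  have e1 : s0 - s1 * h = a := by rw [← hp₀a]; field_simp; ring
  have e2 : s0 = b := by rw [← hp₀b]; field_simp; ring
  have e3 : t0 = b := by rw [← hp₁b]; field_simp; ring
  have e4 : t0 + t1 * h = c := by rw [← hp₁c]; field_simp; ring
  have e5 : m0 - m1 * h + m2 * (13 / 12 * h ^ 2) = a := by rw [← hMa]; field_simp; ring
  have e6 : m0 + m2 * (h ^ 2 / 12) = b := by rw [← hMb]; field_simp; ring
  have e7 : m0 + m1 * h + m2 * (13 / 12 * h ^ 2) = c := by rw [← hMc]; field_simp; ring
  have e8 : m1 = (s1 + t1) / 2 := by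
    apply mul_right_cancel₀ hne
    linarith
  rw [e8]
  linarith
end
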